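/- arXiv:2106.07712 — 2 statements merged into one kernel-verified Lean document; each statement's English description precedes it below -/
import Mathlib

section
/- Assume E₀ ≠ ∅ and fix ε₀ > 0 such that C_{ε₀} ≠ ∅, and n ∈ ℕ, n ≥ 1. Define λ̲ = min{(u − sup C_{ε₀})/(1 + sup C_{ε₀}), (v + inf C_{ε₀})/(1 − inf C_{ε₀})} and λ̄ = max{(u − inf C_{ε₀})/(1 + inf C_{ε₀}), (v + sup C_{ε₀})/(1 − sup C_{ε₀})}, and let F_n^{[λ̲,λ̄]} = {g ∈ F^∞ : the Lebesgue measure of {c ∈ C_{ε₀} : ∃ λ ∈ E₀ ∩ E_c ∩ [λ̲,λ̄], G_g(λ,0) = G_g(λ,c) = 0} is at least 1/n}. If f ∈ F^∞ belongs to the closure of F_n^{[λ̲,λ̄]} in the sup-norm metric, then there exists a set S ⊂ C_{ε₀} of Lebesgue measure at least 1/n such that for every c ∈ S the system G_f(λ,0) = 0 and G_f(λ,c) = 0 has a solution λ in closure(E₀) ∩ closure(E_c) ∩ [λ̲,λ̄]. -/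
/-!
Write `Q_f x = ∫_x^{shi} f(s)(1-2s)/s ds`. Since the integral over the whole signal range vanishes,
`G_f(λ,c) = -p Q_f(m(λ,c)) + (1-p) Q_f(mm(λ,c))` (`Gfun_eq_tail`). The weight `(1-2s)/s` may blow up
at `s = 0`, but for `λ ≥ λ̲ > 0` and shocks in `C_{ε₀}` all cutoffs are at least some `η > 0`, so `Q_f`
only sees the weight where it is bounded by `1/η`; hence `|G_f - G_g| ≤ ‖f - g‖_∞ / η` uniformly
(`abs_Gfun_sub_le`).

For `δ > 0` let `T_δ` be the set of `c ∈ C_{ε₀}` for which some `λ ∈ E₀ ∩ E_c ∩ [λ̲,λ̄]` satisfies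
`|G_f(λ,0)| < δ` and `|G_f(λ,c)| < δ`. It is a union over `λ` of sets of `c` that are open, hence is
measurable, and it contains the stationary set of every `g` close enough to `f`, so its measure is
at least `1/n`. Continuity from above gives the same bound for `S = ⋂ T_{1/(k+1)}`, and for `c ∈ S`
compactness of `[λ̲,λ̄]` and continuity of `G_f` produce the required solution in the closures.
-/

open Set MeasureTheory
open scoped ENNReal

noncomputable section

/-- Cutoff of the match type: m(λ,c). -/
def mcut (u lam c : ℝ) : ℝ := lam * (1 + c) / (lam * (1 + c) + (u - c))

/-- Cutoff of the mismatch type: mm(λ,c). -/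
def mmcut (v lam c : ℝ) : ℝ := lam * (1 - c) / (lam * (1 - c) + (v + c))

/-- Confounding region E_c. -/
def Econf (u v slo shi c : ℝ) : Set ℝ :=
  {lam : ℝ | 0 < lam ∧ mcut u lam c ∈ Ioo slo shi ∧ mmcut v lam c ∈ Ioo slo shi}

/-- The signal class F^∞ on (slo, shi). -/
def Fclass (slo shi : ℝ) : Set (ℝ → ℝ) :=
  {f : ℝ → ℝ | ContinuousOn f (Ioo slo shi)
    ∧ (∀ s ∈ Ioo slo shi, 0 ≤ f s)
    ∧ (∫ s in slo..shi, f s) = 1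
    ∧ (∫ s in slo..shi, f s * (1 - 2 * s) / s) = 0
    ∧ (∃ M : ℝ, ∀ s ∈ Ioo slo shi, |f s| ≤ M)
    ∧ (∃ M : ℝ, ∀ s ∈ Ioo slo shi, |f s * (1 - s) / s| ≤ M)}

/-- G_f(λ,c). -/
def Gfun (p u v slo shi : ℝ) (f : ℝ → ℝ) (lam c : ℝ) : ℝ :=
  p * (∫ s in slo..(mcut u lam c), f s * (1 - 2 * s) / s)
  + (1 - p) * (∫ s in (mmcut v lam c)..shi, f s * (1 - 2 * s) / s)

/-- The shock set C. -/
def Cshock (u v slo shi : ℝ) : Set ℝ :=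
  {c : ℝ | c ≠ 0 ∧ (Econf u v slo shi c).Nonempty}

/-- The meaningful shock set C_{ε₀}. -/
def Ceps (u v slo shi e0 : ℝ) : Set ℝ :=
  Cshock u v slo shi ∩ Ioo (-1 + e0) (u - e0) ∩ Ioo (-v + e0) (1 - e0)

/-- The sup-norm (L∞) distance between two signals on (slo, shi). -/
def supDist (slo shi : ℝ) (f g : ℝ → ℝ) : ℝ :=
  ⨆ s : Ioo slo shi, |f s.1 - g s.1|

/-- `A` is nowhere dense in F^∞ w.r.t. the sup-norm metric: inside every ball of F^∞
there is a smaller ball of F^∞ disjoint from `A`. -/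
def NowhereDenseIn (slo shi : ℝ) (A : Set (ℝ → ℝ)) : Prop :=
  ∀ f ∈ Fclass slo shi, ∀ ε > (0:ℝ), ∃ g ∈ Fclass slo shi,
    supDist slo shi f g < ε ∧ ∃ δ > (0:ℝ), ∀ h ∈ A, ¬ supDist slo shi g h < δ

/-- `A` is meagre (of first category) in F^∞ w.r.t. the sup-norm metric. -/
def MeagreIn (slo shi : ℝ) (A : Set (ℝ → ℝ)) : Prop :=
  ∃ B : ℕ → Set (ℝ → ℝ), (∀ n, NowhereDenseIn slo shi (B n)) ∧ A ⊆ ⋃ n, B n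

/-- `f` lies in the closure of `A` inside F^∞ w.r.t. the sup-norm metric. -/
def InClosureIn (slo shi : ℝ) (A : Set (ℝ → ℝ)) (f : ℝ → ℝ) : Prop :=
  ∀ ε > (0:ℝ), ∃ g ∈ A, supDist slo shi f g < ε

/-- The stationary set S_f of a signal f. -/
def statSet (p u v slo shi e0 : ℝ) (f : ℝ → ℝ) : Set ℝ :=
  {c ∈ Ceps u v slo shi e0 | ∃ lam ∈ Econf u v slo shi 0 ∩ Econf u v slo shi c,
     Gfun p u v slo shi f lam 0 = 0 ∧ Gfun p u v slo shi f lam c = 0}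

/-- F_n : signals whose stationary set has Lebesgue measure at least 1/n. -/
def Fn (p u v slo shi e0 : ℝ) (n : ℕ) : Set (ℝ → ℝ) :=
  {f ∈ Fclass slo shi | (1 : ℝ≥0∞) / n ≤ volume (statSet p u v slo shi e0 f)}

/-- M_λ : shocks in C_{ε₀} whose cutoffs at λ lie in [slo, shi]. -/
def Mset (u v slo shi e0 lam : ℝ) : Set ℝ :=
  {c ∈ Ceps u v slo shi e0 | mcut u lam c ∈ Icc slo shi ∧ mmcut v lam c ∈ Icc slo shi}

/-- λ̲. -/
def lamLo (u v slo shi e0 : ℝ) : ℝ :=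
  min ((u - sSup (Ceps u v slo shi e0)) / (1 + sSup (Ceps u v slo shi e0)))
      ((v + sInf (Ceps u v slo shi e0)) / (1 - sInf (Ceps u v slo shi e0)))

/-- λ̄. -/
def lamHi (u v slo shi e0 : ℝ) : ℝ :=
  max ((u - sInf (Ceps u v slo shi e0)) / (1 + sInf (Ceps u v slo shi e0)))
      ((v + sSup (Ceps u v slo shi e0)) / (1 - sSup (Ceps u v slo shi e0)))

open Filter Topology

/-- `Q_f x`, the integral of `f(s)(1-2s)/s` over `[x, shi]`. -/
def tailInt (shi : ℝ) (f : ℝ → ℝ) (x : ℝ) : ℝ := ∫ s in x..shi, f s * (1 - 2 * s) / s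

/-- Shocks for which the factors `1 + c`, `1 - c` are at least `e0` and `u - c`, `v + c` are positive,
so that both cutoffs have positive denominators at every `λ > 0` when `e0 > 0`. All elements of `C_{ε₀}`
qualify and, if `C_{ε₀} ≠ ∅`, so does `0`. -/
def GoodShock (u v e0 c : ℝ) : Prop := e0 ≤ 1 + c ∧ e0 ≤ 1 - c ∧ 0 < u - c ∧ 0 < v + c

lemma GoodShock.of_mem_Ceps {u v slo shi e0 c : ℝ} (he0 : 0 < e0)
    (h : c ∈ Ceps u v slo shi e0) : GoodShock u v e0 c := by
  obtain ⟨⟨_, h1, h2⟩, h3, h4⟩ := h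
  refine ⟨?_, ?_, ?_, ?_⟩ <;> linarith

lemma GoodShock.zero {u v slo shi e0 c : ℝ} (hu : 0 < u) (hv : 0 < v)
    (h : c ∈ Ceps u v slo shi e0) : GoodShock u v e0 0 := by
  obtain ⟨⟨_, h1, h2⟩, h3, h4⟩ := h
  refine ⟨?_, ?_, ?_, ?_⟩ <;> linarith

/-! ### Tail integrals and their dependence on the signal -/

lemma integrableOn_weighted {slo shi : ℝ} (hslo : 0 ≤ slo) {f : ℝ → ℝ}
    (hf : f ∈ Fclass slo shi) :
    IntegrableOn (fun s => f s * (1 - 2 * s) / s) (Icc slo shi) := by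
  obtain ⟨hc, -, -, -, ⟨M, hM⟩, ⟨N, hN⟩⟩ := hf
  rw [integrableOn_Icc_iff_integrableOn_Ioo]
  refine IntegrableOn.of_bound (C := N + M) (by simp) ?_ ?_
  · apply ContinuousOn.aestronglyMeasurable _ measurableSet_Ioo
    refine ContinuousOn.div (hc.mul (by fun_prop)) continuousOn_id ?_
    intro s hs
    exact (lt_of_le_of_lt hslo hs.1).ne'
  · refine (ae_restrict_iff' measurableSet_Ioo).2 (ae_of_all _ fun s hs => ?_)
    have hs0 : 0 < s := lt_of_le_of_lt hslo hs.1
    have : f s * (1 - 2 * s) / s = f s * (1 - s) / s - f s := by field_simp; ring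
    rw [Real.norm_eq_abs, this]
    exact (abs_sub _ _).trans (add_le_add (hN s hs) (hM s hs))

lemma intervalIntegrable_weighted {slo shi : ℝ} (hslo : 0 ≤ slo) {f : ℝ → ℝ}
    (hf : f ∈ Fclass slo shi) {x y : ℝ} (hx : x ∈ Icc slo shi) (hy : y ∈ Icc slo shi) :
    IntervalIntegrable (fun s => f s * (1 - 2 * s) / s) volume x y := by
  rw [intervalIntegrable_iff']
  exact (integrableOn_weighted hslo hf).mono_set (uIcc_subset_Icc hx hy)

lemma initInt_eq {slo shi : ℝ} (hslo : 0 ≤ slo) {f : ℝ → ℝ}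
    (hf : f ∈ Fclass slo shi) {x : ℝ} (hx : x ∈ Icc slo shi) :
    (∫ s in slo..x, f s * (1 - 2 * s) / s) = - tailInt shi f x := by
  have hlo : slo ∈ Icc slo shi := ⟨le_rfl, hx.1.trans hx.2⟩
  have hhi : shi ∈ Icc slo shi := ⟨hx.1.trans hx.2, le_rfl⟩
  have h := intervalIntegral.integral_add_adjacent_intervals
    (intervalIntegrable_weighted hslo hf hlo hx) (intervalIntegrable_weighted hslo hf hx hhi)
  rw [hf.2.2.2.1] at h
  unfold tailInt
  linarith

lemma continuousOn_tailInt {slo shi : ℝ} (hslo : 0 ≤ slo) (hss : slo < shi) {f : ℝ → ℝ}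
    (hf : f ∈ Fclass slo shi) : ContinuousOn (tailInt shi f) (Icc slo shi) := by
  have h := intervalIntegral.continuousOn_primitive_interval (μ := volume) (a := slo) (b := shi)
    (f := fun s => f s * (1 - 2 * s) / s)
    (by rw [uIcc_of_le hss.le]; exact integrableOn_weighted hslo hf)
  rw [uIcc_of_le hss.le] at h
  refine h.neg.congr fun x hx => ?_
  simp only [Pi.neg_apply]
  rw [initInt_eq hslo hf hx, neg_neg]

lemma Gfun_eq_tail {p u v slo shi lam c : ℝ} (hslo : 0 ≤ slo) {f : ℝ → ℝ}
    (hf : f ∈ Fclass slo shi) (hm : mcut u lam c ∈ Icc slo shi) :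
    Gfun p u v slo shi f lam c
      = p * (- tailInt shi f (mcut u lam c)) + (1 - p) * tailInt shi f (mmcut v lam c) := by
  rw [Gfun, initInt_eq hslo hf hm, tailInt, tailInt]

lemma abs_sub_le_supDist {slo shi : ℝ} {f g : ℝ → ℝ}
    (hf : f ∈ Fclass slo shi) (hg : g ∈ Fclass slo shi) {s : ℝ} (hs : s ∈ Ioo slo shi) :
    |f s - g s| ≤ supDist slo shi f g := by
  obtain ⟨M, hM⟩ := hf.2.2.2.2.1
  obtain ⟨N, hN⟩ := hg.2.2.2.2.1
  refine le_ciSup (f := fun s : Ioo slo shi => |f s.1 - g s.1|) ⟨M + N, ?_⟩ ⟨s, hs⟩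
  rintro _ ⟨t, rfl⟩
  exact (abs_sub _ _).trans (add_le_add (hM t t.2) (hN t t.2))

lemma abs_tailInt_sub_le {slo shi η ε : ℝ} (hslo : 0 ≤ slo) (hshi : shi ≤ 1) {f g : ℝ → ℝ}
    (hf : f ∈ Fclass slo shi) (hg : g ∈ Fclass slo shi) (hη : 0 < η)
    (hd : supDist slo shi f g ≤ ε) {x : ℝ} (hx : x ∈ Icc slo shi) (hηx : η ≤ x) :
    |tailInt shi f x - tailInt shi g x| ≤ ε / η := by
  have hhi : shi ∈ Icc slo shi := ⟨hx.1.trans hx.2, le_rfl⟩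
  rw [tailInt, tailInt, ← intervalIntegral.integral_sub
    (intervalIntegrable_weighted hslo hf hx hhi) (intervalIntegrable_weighted hslo hg hx hhi)]
  rcases eq_or_lt_of_le hx.2 with hxe | hxl
  · obtain ⟨z, hz⟩ : (Ioo slo shi).Nonempty := by
      by_contra hne
      have h1 := hf.2.2.1
      have : shi ≤ slo := by
        by_contra hlt
        exact hne (nonempty_Ioo.2 (not_le.1 hlt))
      rw [le_antisymm this hhi.1] at h1
      simp at h1
    have : 0 ≤ ε := (abs_nonneg _).trans ((abs_sub_le_supDist hf hg hz).trans hd)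
    rw [hxe, intervalIntegral.integral_same, abs_zero]
    positivity
  have hz : (x + shi) / 2 ∈ Ioo slo shi := ⟨by linarith [hx.1], by linarith⟩
  have hε : 0 ≤ ε := (abs_nonneg _).trans ((abs_sub_le_supDist hf hg hz).trans hd)
  have key := intervalIntegral.norm_integral_le_of_norm_le_const_ae (a := x) (b := shi)
    (C := ε / η) (f := fun s => f s * (1 - 2 * s) / s - g s * (1 - 2 * s) / s) ?_
  · rw [Real.norm_eq_abs] at key
    refine key.trans ?_
    rw [abs_of_pos (by linarith)]
    have : 0 ≤ ε / η := by positivity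
    nlinarith
  · have hne : ∀ᵐ s : ℝ, s ≠ shi := by simp [ae_iff]
    -- The value at the endpoint `shi` is unconstrained, so that point is discarded as a null set.
    filter_upwards [hne] with s hs hsI
    rw [uIoc_of_le hx.2] at hsI
    have hsI' : s ∈ Ioo slo shi := ⟨lt_of_le_of_lt hx.1 hsI.1, lt_of_le_of_ne hsI.2 hs⟩
    have hsη : η ≤ s := hηx.trans hsI.1.le
    have hs0 : 0 < s := hη.trans_le hsη
    have e : f s * (1 - 2 * s) / s - g s * (1 - 2 * s) / s = (f s - g s) * (1 - 2 * s) / s := by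
      ring
    rw [e, Real.norm_eq_abs, abs_div, abs_mul, abs_of_pos hs0]
    have h1 : |1 - 2 * s| ≤ 1 := by
      rw [abs_le]; constructor <;> linarith [hsI.2]
    have h2 := (abs_sub_le_supDist hf hg hsI').trans hd
    apply div_le_div₀ hε _ hη hsη
    calc |f s - g s| * |1 - 2 * s| ≤ ε * 1 := mul_le_mul h2 h1 (abs_nonneg _) hε
      _ = ε := mul_one _

lemma abs_Gfun_sub_le {p u v slo shi lam c η ε : ℝ} (hp : p ∈ Ioo (0:ℝ) 1)
    (hslo : 0 ≤ slo) (hshi : shi ≤ 1) {f g : ℝ → ℝ}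
    (hf : f ∈ Fclass slo shi) (hg : g ∈ Fclass slo shi) (hη : 0 < η)
    (hd : supDist slo shi f g ≤ ε)
    (hm : mcut u lam c ∈ Icc slo shi) (hmm : mmcut v lam c ∈ Icc slo shi)
    (hηm : η ≤ mcut u lam c) (hηmm : η ≤ mmcut v lam c) :
    |Gfun p u v slo shi f lam c - Gfun p u v slo shi g lam c| ≤ ε / η := by
  rw [Gfun_eq_tail hslo hf hm, Gfun_eq_tail hslo hg hm]
  have h1 := abs_le.1 (abs_tailInt_sub_le hslo hshi hf hg hη hd hm hηm)
  have h2 := abs_le.1 (abs_tailInt_sub_le hslo hshi hf hg hη hd hmm hηmm)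
  obtain ⟨hp0, hp1⟩ := hp
  rw [abs_le]
  constructor <;> nlinarith

/-! ### Bounds on the cutoffs -/

lemma cut_lower {a b a0 b0 : ℝ} (ha0 : 0 < a0) (ha : a0 ≤ a) (hb0 : 0 < b) (hb : b ≤ b0) :
    a0 / (a0 + b0) ≤ a / (a + b) := by
  rw [div_le_div_iff₀ (by linarith) (by linarith)]
  nlinarith [mul_le_mul ha hb hb0.le (by linarith)]

/-- Cutoffs of good shocks at `λ ≥ L > 0` are bounded away from `0` uniformly. -/
lemma cuts_lower {u v e0 L lam c : ℝ} (hu : 0 < u) (hv : 0 < v) (he0 : 0 < e0) (hL : 0 < L)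
    (hlam : L ≤ lam) (hc : GoodShock u v e0 c) :
    L * e0 / (L * e0 + (u + v + 1)) ≤ mcut u lam c ∧
      L * e0 / (L * e0 + (u + v + 1)) ≤ mmcut v lam c := by
  obtain ⟨h1, h2, h3, h4⟩ := hc
  have hLe : 0 < L * e0 := by positivity
  exact ⟨cut_lower hLe (mul_le_mul hlam h1 he0.le (by linarith)) h3 (by linarith),
    cut_lower hLe (mul_le_mul hlam h2 he0.le (by linarith)) h4 (by linarith)⟩

lemma den_pos {u v e0 lam c : ℝ} (he0 : 0 < e0) (hlam : 0 < lam) (hc : GoodShock u v e0 c) :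
    0 < lam * (1 + c) + (u - c) ∧ 0 < lam * (1 - c) + (v + c) := by
  obtain ⟨h1, h2, h3, h4⟩ := hc
  have a1 : 0 < 1 + c := by linarith
  have a2 : 0 < 1 - c := by linarith
  constructor <;> positivity

/-- `λ̲ > 0`: the bounds defining `C_{ε₀}` pass to its supremum and infimum. -/
lemma lamLo_pos {u v slo shi e0 : ℝ} (he0 : 0 < e0) (hC : (Ceps u v slo shi e0).Nonempty) :
    0 < lamLo u v slo shi e0 := by
  have hA : BddAbove (Ceps u v slo shi e0) := ⟨u - e0, fun c hc => hc.1.2.2.le⟩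
  have hB : BddBelow (Ceps u v slo shi e0) := ⟨-1 + e0, fun c hc => hc.1.2.1.le⟩
  have h1 : sSup (Ceps u v slo shi e0) ≤ u - e0 := csSup_le hC fun c hc => hc.1.2.2.le
  have h2 : -v + e0 ≤ sInf (Ceps u v slo shi e0) := le_csInf hC fun c hc => hc.2.1.le
  obtain ⟨c, hc⟩ := hC
  have h3 := le_csSup hA hc
  have h4 := csInf_le hB hc
  have h5 := hc.1.2.1
  have h6 := hc.2.2
  apply lt_min <;> apply div_pos <;> linarith

/-! ### Approximate stationary sets and limits -/

/-- The set `T_δ`: shocks in `C_{ε₀}` for which the two stationarity equations of `f` are solved up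
to an error `δ` by a common `λ ∈ E₀ ∩ E_c ∩ [λ̲,λ̄]`. -/
def approxSet (p u v slo shi e0 : ℝ) (f : ℝ → ℝ) (δ : ℝ) : Set ℝ :=
  {c ∈ Ceps u v slo shi e0 |
    ∃ lam ∈ Econf u v slo shi 0 ∩ Econf u v slo shi c ∩
        Icc (lamLo u v slo shi e0) (lamHi u v slo shi e0),
      |Gfun p u v slo shi f lam 0| < δ ∧ |Gfun p u v slo shi f lam c| < δ}

/-- For a fixed `λ` the conditions on `c` are open, so the witness `λ` may be kept nearby. -/
lemma isOpen_approxSet {p u v slo shi e0 : ℝ} (he0 : 0 < e0) (hslo : 0 ≤ slo) (hss : slo < shi)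
    {f : ℝ → ℝ} (hf : f ∈ Fclass slo shi) (δ : ℝ) :
    IsOpen (approxSet p u v slo shi e0 f δ) := by
  rw [isOpen_iff_mem_nhds]
  rintro c ⟨hc, lam, ⟨⟨h0, hlam, hm, hmm⟩, hI⟩, hG0, hG⟩
  obtain ⟨hd1, hd2⟩ := den_pos he0 hlam (GoodShock.of_mem_Ceps he0 hc)
  have cm : ContinuousAt (fun c => mcut u lam c) c := by
    unfold mcut
    exact ContinuousAt.div (by fun_prop) (by fun_prop) hd1.ne'
  have cmm : ContinuousAt (fun c => mmcut v lam c) c := by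
    unfold mmcut
    exact ContinuousAt.div (by fun_prop) (by fun_prop) hd2.ne'
  have cQ := continuousOn_tailInt hslo hss hf
  have cQm : ContinuousAt (fun c => tailInt shi f (mcut u lam c)) c :=
    ContinuousAt.comp (g := tailInt shi f) (cQ.continuousAt (Icc_mem_nhds hm.1 hm.2)) cm
  have cQmm : ContinuousAt (fun c => tailInt shi f (mmcut v lam c)) c :=
    ContinuousAt.comp (g := tailInt shi f) (cQ.continuousAt (Icc_mem_nhds hmm.1 hmm.2)) cmm
  have cG : ContinuousAt (fun c => |p * (- tailInt shi f (mcut u lam c))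
      + (1 - p) * tailInt shi f (mmcut v lam c)|) c := by fun_prop
  rw [Gfun_eq_tail hslo hf (Ioo_subset_Icc_self hm)] at hG
  filter_upwards [cm.eventually_mem (Ioo_mem_nhds hm.1 hm.2),
    cmm.eventually_mem (Ioo_mem_nhds hmm.1 hmm.2), cG.eventually_lt_const hG,
    isOpen_ne.mem_nhds hc.1.1.1, Ioo_mem_nhds hc.1.2.1 hc.1.2.2, Ioo_mem_nhds hc.2.1 hc.2.2]
    with d h1 h2 h3 h4 h5 h6
  refine ⟨⟨⟨⟨h4, lam, hlam, h1, h2⟩, h5⟩, h6⟩, lam, ⟨⟨h0, hlam, h1, h2⟩, hI⟩, hG0, ?_⟩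
  rw [Gfun_eq_tail hslo hf (Ioo_subset_Icc_self h1)]
  exact h3

/-- A limit of approximate zeros of `G_f(·,c)` in `E_c` is a zero, even on the boundary of `E_c`. -/
lemma Gfun_limit_eq_zero {p u v slo shi e0 c lam : ℝ} (he0 : 0 < e0) (hslo : 0 ≤ slo)
    (hss : slo < shi) {f : ℝ → ℝ} (hf : f ∈ Fclass slo shi) (hc : GoodShock u v e0 c)
    (hlam : 0 < lam) {x : ℕ → ℝ} (hx : Tendsto x atTop (𝓝 lam))
    (hxE : ∀ k, x k ∈ Econf u v slo shi c)
    (hG : Tendsto (fun k => Gfun p u v slo shi f (x k) c) atTop (𝓝 0)) :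
    Gfun p u v slo shi f lam c = 0 := by
  obtain ⟨hd1, hd2⟩ := den_pos he0 hlam hc
  have cm : ContinuousAt (fun l => mcut u l c) lam := by
    unfold mcut
    exact ContinuousAt.div (by fun_prop) (by fun_prop) hd1.ne'
  have cmm : ContinuousAt (fun l => mmcut v l c) lam := by
    unfold mmcut
    exact ContinuousAt.div (by fun_prop) (by fun_prop) hd2.ne'
  have tm : Tendsto (fun k => mcut u (x k) c) atTop (𝓝 (mcut u lam c)) := cm.tendsto.comp hx
  have tmm : Tendsto (fun k => mmcut v (x k) c) atTop (𝓝 (mmcut v lam c)) := cmm.tendsto.comp hx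
  have im : ∀ k, mcut u (x k) c ∈ Icc slo shi := fun k => Ioo_subset_Icc_self (hxE k).2.1
  have imm : ∀ k, mmcut v (x k) c ∈ Icc slo shi := fun k => Ioo_subset_Icc_self (hxE k).2.2
  have lm : mcut u lam c ∈ Icc slo shi := isClosed_Icc.mem_of_tendsto tm (.of_forall im)
  have lmm : mmcut v lam c ∈ Icc slo shi := isClosed_Icc.mem_of_tendsto tmm (.of_forall imm)
  have cQ := continuousOn_tailInt hslo hss hf
  have t1 : Tendsto (fun k => tailInt shi f (mcut u (x k) c)) atTop
      (𝓝 (tailInt shi f (mcut u lam c))) :=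
    (cQ _ lm).tendsto.comp (tendsto_nhdsWithin_iff.2 ⟨tm, .of_forall im⟩)
  have t2 : Tendsto (fun k => tailInt shi f (mmcut v (x k) c)) atTop
      (𝓝 (tailInt shi f (mmcut v lam c))) :=
    (cQ _ lmm).tendsto.comp (tendsto_nhdsWithin_iff.2 ⟨tmm, .of_forall imm⟩)
  rw [Gfun_eq_tail hslo hf lm]
  refine tendsto_nhds_unique ?_ hG
  simp_rw [fun k => Gfun_eq_tail (p := p) (v := v) hslo hf (im k)]
  exact (t1.neg.const_mul p).add (t2.const_mul (1 - p))

/-- description of the closure of F_n^{[λ̲,λ̄]} in F^∞. -/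
theorem closure_of_Fn_restricted
    (p u v slo shi e0 : ℝ) (n : ℕ)
    (hp : p ∈ Ioo (0:ℝ) 1) (hu : 0 < u) (hv : 0 < v) (huv : u ≠ v)
    (hslo : 0 ≤ slo) (hss : slo < shi) (hshi : shi ≤ 1)
    (hE0 : (Econf u v slo shi 0).Nonempty)
    (he0 : 0 < e0) (hC : (Ceps u v slo shi e0).Nonempty)
    (hn : 1 ≤ n)
    (f : ℝ → ℝ) (hf : f ∈ Fclass slo shi)
    (hcl : InClosureIn slo shi
      {g ∈ Fclass slo shi | (1 : ℝ≥0∞) / n ≤ volume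
        {c ∈ Ceps u v slo shi e0 |
          ∃ lam ∈ Econf u v slo shi 0 ∩ Econf u v slo shi c ∩
              Icc (lamLo u v slo shi e0) (lamHi u v slo shi e0),
            Gfun p u v slo shi g lam 0 = 0 ∧ Gfun p u v slo shi g lam c = 0}} f) :
    ∃ S ⊆ Ceps u v slo shi e0, (1 : ℝ≥0∞) / n ≤ volume S ∧
      ∀ c ∈ S, ∃ lam ∈ closure (Econf u v slo shi 0) ∩ closure (Econf u v slo shi c) ∩
          Icc (lamLo u v slo shi e0) (lamHi u v slo shi e0),
        Gfun p u v slo shi f lam 0 = 0 ∧ Gfun p u v slo shi f lam c = 0 := by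
  have hL := lamLo_pos he0 hC
  have hgood0 : GoodShock u v e0 0 := GoodShock.zero hu hv hC.some_mem
  set L := lamLo u v slo shi e0 with hLdef
  set η : ℝ := L * e0 / (L * e0 + (u + v + 1)) with hη
  have hηpos : 0 < η := by positivity
  have hvol : ∀ δ > 0, (1 : ℝ≥0∞) / n ≤ volume (approxSet p u v slo shi e0 f δ) := by
    intro δ hδ
    obtain ⟨g, ⟨hg, hgv⟩, hd⟩ := hcl (δ / 2 * η) (by positivity)
    refine hgv.trans (measure_mono ?_)
    rintro c ⟨hc, lam, hmem, hG0, hGc⟩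
    have hbound : ∀ d, GoodShock u v e0 d → lam ∈ Econf u v slo shi d →
        Gfun p u v slo shi g lam d = 0 → |Gfun p u v slo shi f lam d| < δ := by
      intro d hd' hE hz
      obtain ⟨b1, b2⟩ := cuts_lower hu hv he0 hL hmem.2.1 hd'
      have := abs_Gfun_sub_le hp hslo hshi hf hg hηpos hd.le
        (Ioo_subset_Icc_self hE.2.1) (Ioo_subset_Icc_self hE.2.2) b1 b2
      rw [hz, sub_zero, mul_div_cancel_right₀ _ hηpos.ne'] at this
      linarith
    exact ⟨hc, lam, hmem, hbound 0 hgood0 hmem.1.1 hG0,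
      hbound c (.of_mem_Ceps he0 hc) hmem.1.2 hGc⟩
  let T : ℕ → Set ℝ := fun k => approxSet p u v slo shi e0 f (1 / ((k : ℝ) + 1))
  have hTanti : Antitone T := by
    rintro i j hij c ⟨hc, lam, hmem, h1, h2⟩
    have := Nat.one_div_le_one_div (α := ℝ) hij
    exact ⟨hc, lam, hmem, h1.trans_le this, h2.trans_le this⟩
  have hTfin : volume (T 0) ≠ ∞ := by
    have hsub : T 0 ⊆ Ioo (-1 + e0) (u - e0) := fun c hc => hc.1.1.2
    exact ((measure_mono hsub).trans_lt (by simp)).ne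
  refine ⟨⋂ k, T k, fun c hc => (mem_iInter.1 hc 0).1, ?_, ?_⟩
  · rw [hTanti.measure_iInter
      (fun k => (isOpen_approxSet he0 hslo hss hf _).measurableSet.nullMeasurableSet) ⟨0, hTfin⟩]
    exact le_iInf fun k => hvol _ (by positivity)
  · intro c hc
    have hcC : c ∈ Ceps u v slo shi e0 := (mem_iInter.1 hc 0).1
    choose x hx using fun k => (mem_iInter.1 hc k).2
    obtain ⟨lam, hlam, φ, hφ, hlim⟩ := isCompact_Icc.tendsto_subseq fun k => (hx k).1.2
    have hlam0 : 0 < lam := hL.trans_le hlam.1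
    have hsmall : Tendsto (fun k => 1 / ((φ k : ℝ) + 1)) atTop (𝓝 0) :=
      (tendsto_one_div_add_atTop_nhds_zero_nat (𝕜 := ℝ)).comp hφ.tendsto_atTop
    refine ⟨lam, ⟨⟨mem_closure_of_tendsto hlim (.of_forall fun k => (hx (φ k)).1.1.1),
      mem_closure_of_tendsto hlim (.of_forall fun k => (hx (φ k)).1.1.2)⟩, hlam⟩, ?_, ?_⟩
    · exact Gfun_limit_eq_zero he0 hslo hss hf hgood0 hlam0 hlim
        (fun k => (hx (φ k)).1.1.1)
        (squeeze_zero_norm (fun k => (hx (φ k)).2.1.le) hsmall)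
    · exact Gfun_limit_eq_zero he0 hslo hss hf (.of_mem_Ceps he0 hcC) hlam0 hlim
        (fun k => (hx (φ k)).1.1.2)
        (squeeze_zero_norm (fun k => (hx (φ k)).2.2.le) hsmall)
end
end

section
/- Let f ∈ F^∞, let λ > 0, and let I ⊂ (−1,u) ∩ (−v,1) be an open interval such that m(λ,c) ∈ (s̲,s̄) and mm(λ,c) ∈ (s̲,s̄) for all c ∈ I. If m(λ,c) < 1/2 and mm(λ,c) < 1/2 for all c ∈ I, then the map c ↦ G_f(λ,c) is nondecreasing on I (its derivative is ≥ 0 on I). If instead m(λ,c) > 1/2 and mm(λ,c) > 1/2 for all c ∈ I, then c ↦ G_f(λ,c) is nonincreasing on I (its derivative is ≤ 0 on I). -/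
/-!
Write `g s = f s * (1 - 2 * s) / s`. On `(slo, shi)` one has `g = f (1 - s) / s - f`, a difference of
bounded continuous functions, so `g` is integrable there (`Fclass_integrable`). The cutoff `mcut` is
nondecreasing and `mmcut` nonincreasing in `c` (`mcut_le_mcut`, `mmcut_le_mmcut`), hence for `x ≤ y`
the increment of `G` is
`p * ∫ s in mcut x..mcut y, g s + (1 - p) * ∫ s in mmcut y..mmcut x, g s` (`Gfun_sub`),
two integrals in the positive direction. The sign of `g` is that of `1 - 2 * s`, which is
nonnegative when the cutoffs are below `1/2` and nonpositive when they are above.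
-/

open Set MeasureTheory
open scoped ENNReal

noncomputable section

theorem mcut_le_mcut {u lam x y : ℝ} (hlam : 0 < lam) (hx : x ∈ Ioo (-1) u)
    (hy : y ∈ Ioo (-1) u) (hxy : x ≤ y) : mcut u lam x ≤ mcut u lam y := by
  obtain ⟨hx1, hx2⟩ := hx
  obtain ⟨hy1, hy2⟩ := hy
  have h1 : 0 < lam * (1 + x) := mul_pos hlam (by linarith)
  have h2 : 0 < lam * (1 + y) := mul_pos hlam (by linarith)
  unfold mcut
  rw [div_le_div_iff₀ (by linarith) (by linarith)]
  -- the difference of the two cross products is `lam * (1 + u) * (y - x)`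
  have h3 : 0 ≤ lam * ((1 + u) * (y - x)) :=
    mul_nonneg hlam.le (mul_nonneg (by linarith) (by linarith))
  nlinarith

theorem mmcut_le_mmcut {v lam x y : ℝ} (hlam : 0 < lam) (hx : x ∈ Ioo (-v) 1)
    (hy : y ∈ Ioo (-v) 1) (hxy : x ≤ y) : mmcut v lam y ≤ mmcut v lam x := by
  -- `mmcut` is `mcut` reflected in `c`
  have h := mcut_le_mcut (u := v) (x := -y) (y := -x) hlam
    ⟨by linarith [hy.2], by linarith [hy.1]⟩ ⟨by linarith [hx.2], by linarith [hx.1]⟩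
    (by linarith)
  simpa [mcut, mmcut, sub_eq_add_neg] using h

theorem Fclass_integrable {slo shi : ℝ} {f : ℝ → ℝ} (hslo : 0 ≤ slo)
    (hf : f ∈ Fclass slo shi) :
    IntegrableOn (fun s => f s * (1 - 2 * s) / s) (Ioo slo shi) := by
  obtain ⟨hc, -, -, -, ⟨M, hM⟩, ⟨N, hN⟩⟩ := hf
  have hpos : ∀ s ∈ Ioo slo shi, s ≠ 0 := fun s hs => (hslo.trans_lt hs.1).ne'
  refine IntegrableOn.of_bound (by simp) ?_ (N + M) ?_
  · refine ContinuousOn.aestronglyMeasurable ?_ measurableSet_Ioo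
    exact (hc.mul (by fun_prop)).div continuousOn_id hpos
  · refine (ae_restrict_iff' measurableSet_Ioo).2 (Filter.Eventually.of_forall fun s hs => ?_)
    have h0 := hpos s hs
    have e : f s * (1 - 2 * s) / s = f s * (1 - s) / s - f s := by field_simp; ring
    rw [Real.norm_eq_abs, e]
    exact (abs_sub _ _).trans (add_le_add (hN s hs) (hM s hs))

theorem Gfun_sub {p u v slo shi : ℝ} {f : ℝ → ℝ} {lam x y : ℝ} (hslo : 0 ≤ slo)
    (hss : slo < shi) (hf : f ∈ Fclass slo shi)
    (hx : mcut u lam x ∈ Ioo slo shi ∧ mmcut v lam x ∈ Ioo slo shi)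
    (hy : mcut u lam y ∈ Ioo slo shi ∧ mmcut v lam y ∈ Ioo slo shi) :
    Gfun p u v slo shi f lam y - Gfun p u v slo shi f lam x =
      p * (∫ s in (mcut u lam x)..(mcut u lam y), f s * (1 - 2 * s) / s)
      + (1 - p) * (∫ s in (mmcut v lam y)..(mmcut v lam x), f s * (1 - 2 * s) / s) := by
  have hint : ∀ r t, r ∈ Icc slo shi → t ∈ Icc slo shi →
      IntervalIntegrable (fun s => f s * (1 - 2 * s) / s) volume r t := by
    intro r t hr ht
    have h := (intervalIntegrable_iff_integrableOn_Ioo_of_le hss.le).2 (Fclass_integrable hslo hf)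
    refine h.mono_set ?_
    rw [uIcc_of_le hss.le]
    exact uIcc_subset_Icc hr ht
  have hl : slo ∈ Icc slo shi := ⟨le_rfl, hss.le⟩
  have hr : shi ∈ Icc slo shi := ⟨hss.le, le_rfl⟩
  have hI := Ioo_subset_Icc_self (a := slo) (b := shi)
  have e1 := intervalIntegral.integral_add_adjacent_intervals
    (hint _ _ hl (hI hx.1)) (hint _ _ (hI hx.1) (hI hy.1))
  have e2 := intervalIntegral.integral_add_adjacent_intervals
    (hint _ _ (hI hy.2) (hI hx.2)) (hint _ _ (hI hx.2) hr)
  unfold Gfun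
  rw [← e1, ← e2]
  ring

/-- monotonicity of G_f(λ,·) in the shock when both cutoffs stay
below (resp. above) 1/2. -/
theorem Gfun_monotone_in_c
    (p u v slo shi : ℝ)
    (hp : p ∈ Ioo (0:ℝ) 1) (hu : 0 < u) (hv : 0 < v)
    (hslo : 0 ≤ slo) (hss : slo < shi) (hshi : shi ≤ 1)
    (f : ℝ → ℝ) (hf : f ∈ Fclass slo shi)
    (lam : ℝ) (hlam : 0 < lam) (a b : ℝ)
    (hI : Ioo a b ⊆ Ioo (-1 : ℝ) u ∩ Ioo (-v) 1)
    (hcut : ∀ c ∈ Ioo a b, mcut u lam c ∈ Ioo slo shi ∧ mmcut v lam c ∈ Ioo slo shi) :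
    ((∀ c ∈ Ioo a b, mcut u lam c < 1 / 2 ∧ mmcut v lam c < 1 / 2) →
      MonotoneOn (fun t : ℝ => Gfun p u v slo shi f lam t) (Ioo a b)) ∧
    ((∀ c ∈ Ioo a b, 1 / 2 < mcut u lam c ∧ 1 / 2 < mmcut v lam c) →
      AntitoneOn (fun t : ℝ => Gfun p u v slo shi f lam t) (Ioo a b)) := by
  have hf0 := hf.2.1
  obtain ⟨hp0, hp1⟩ := hp
  constructor
  · intro h x hx y hy hxy
    have hm := mcut_le_mcut hlam (hI hx).1 (hI hy).1 hxy
    have hmm := mmcut_le_mmcut hlam (hI hx).2 (hI hy).2 hxy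
    have hsub := Gfun_sub (p := p) hslo hss hf (hcut x hx) (hcut y hy)
    have key : ∀ s ∈ Ioo slo shi, s ≤ 1 / 2 → 0 ≤ f s * (1 - 2 * s) / s := fun s hs hs2 =>
      div_nonneg (mul_nonneg (hf0 s hs) (by linarith)) (hslo.trans hs.1.le)
    have i1 := intervalIntegral.integral_nonneg (μ := volume) hm fun s hs =>
      key s ⟨(hcut x hx).1.1.trans_le hs.1, hs.2.trans_lt (hcut y hy).1.2⟩
        (hs.2.trans (h y hy).1.le)
    have i2 := intervalIntegral.integral_nonneg (μ := volume) hmm fun s hs =>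
      key s ⟨(hcut y hy).2.1.trans_le hs.1, hs.2.trans_lt (hcut x hx).2.2⟩
        (hs.2.trans (h x hx).2.le)
    have := mul_nonneg hp0.le i1
    have := mul_nonneg (sub_nonneg.2 hp1.le) i2
    change Gfun p u v slo shi f lam x ≤ Gfun p u v slo shi f lam y
    linarith
  · intro h x hx y hy hxy
    have hm := mcut_le_mcut hlam (hI hx).1 (hI hy).1 hxy
    have hmm := mmcut_le_mmcut hlam (hI hx).2 (hI hy).2 hxy
    have hsub := Gfun_sub (p := p) hslo hss hf (hcut x hx) (hcut y hy)
    have key : ∀ s ∈ Ioo slo shi, 1 / 2 ≤ s → f s * (1 - 2 * s) / s ≤ 0 := fun s hs hs2 =>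
      div_nonpos_of_nonpos_of_nonneg
        (mul_nonpos_of_nonneg_of_nonpos (hf0 s hs) (by linarith)) (hslo.trans hs.1.le)
    have i1 := intervalIntegral.integral_nonneg (μ := volume) hm fun s hs =>
      neg_nonneg.2 <| key s ⟨(hcut x hx).1.1.trans_le hs.1, hs.2.trans_lt (hcut y hy).1.2⟩
        ((h x hx).1.le.trans hs.1)
    have i2 := intervalIntegral.integral_nonneg (μ := volume) hmm fun s hs =>
      neg_nonneg.2 <| key s ⟨(hcut y hy).2.1.trans_le hs.1, hs.2.trans_lt (hcut x hx).2.2⟩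
        ((h y hy).2.le.trans hs.1)
    rw [intervalIntegral.integral_neg, neg_nonneg] at i1 i2
    have := mul_nonpos_of_nonneg_of_nonpos hp0.le i1
    have := mul_nonpos_of_nonneg_of_nonpos (sub_nonneg.2 hp1.le) i2
    change Gfun p u v slo shi f lam y ≤ Gfun p u v slo shi f lam x
    linarith
end
end
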